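/- arXiv:math/0508174 — 5 statements merged into one kernel-verified Lean document; each statement's English description precedes it below -/
import Mathlib

section
/- Let (a, b, c) be integers with a² + b³ = c⁷, gcd(a, b, c) = 1, and 3 ∣ c. Then there exists an integer t, not divisible by 3, such that a ≡ −t³ (mod 3⁷) and b ≡ −t² (mod 3⁷). -/
/-- If `(a, b, c)` is a primitive solution to `a² + b³ = c⁷` with `3 ∣ c`, then there is
an integer `t` not divisible by `3` with `a ≡ -t³` and `b ≡ -t²` modulo `3⁷`. -/
theorem primitive_solution_mod_three_pow_seven (a b c : ℤ)
    (h : a ^ 2 + b ^ 3 = c ^ 7) (hgcd : Int.gcd a (Int.gcd b c : ℤ) = 1)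
    (h3 : (3 : ℤ) ∣ c) :
    ∃ t : ℤ, ¬ (3 : ℤ) ∣ t ∧ a ≡ -t ^ 3 [ZMOD 3 ^ 7] ∧ b ≡ -t ^ 2 [ZMOD 3 ^ 7] := by
  have p3 : Prime (3 : ℤ) := Int.prime_three
  have hc7 : (3 : ℤ) ∣ c ^ 7 := dvd_pow h3 (by norm_num)
  have key : ¬ ((3 : ℤ) ∣ a ∧ (3 : ℤ) ∣ b) := by
    rintro ⟨ha, hb⟩
    have h1 : (3 : ℤ) ∣ (Int.gcd a (Int.gcd b c : ℤ) : ℤ) :=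
      Int.dvd_coe_gcd ha (Int.dvd_coe_gcd hb h3)
    rw [hgcd] at h1
    norm_num at h1
  have hb : ¬ (3 : ℤ) ∣ b := by
    intro hb
    refine key ⟨p3.dvd_of_dvd_pow (n := 2) ?_, hb⟩
    have : a ^ 2 = c ^ 7 - b ^ 3 := by linarith
    rw [this]
    exact dvd_sub hc7 (dvd_pow hb (by norm_num))
  have hcop : IsCoprime b ((3 : ℤ) ^ 7) :=
    (((p3.irreducible.coprime_iff_not_dvd).2 hb).symm).pow_right
  obtain ⟨u, v, huv⟩ := hcop
  obtain ⟨k, hk⟩ : (3 : ℤ) ^ 7 ∣ c ^ 7 := pow_dvd_pow_of_dvd h3 7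
  rw [hk] at h
  generalize hN : (3 : ℤ) ^ 7 = N at *
  have h3N : (3 : ℤ) ∣ N := by rw [← hN]; norm_num
  have d2 : N ∣ -(a * u) ^ 2 - b :=
    ⟨-(u ^ 2 * k + b * v * (1 + b * u)), by
      linear_combination (-u ^ 2) * h + b * (1 + b * u) * huv⟩
  refine ⟨a * u, ?_, ?_, Int.modEq_iff_dvd.2 d2⟩
  · intro ht
    apply hb
    have h1 := dvd_trans h3N d2
    have h2 : (3 : ℤ) ∣ -(a * u) ^ 2 := (dvd_pow ht (by norm_num)).neg_right
    have := dvd_sub h2 h1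
    simpa using this
  · refine Int.modEq_iff_dvd.2 ⟨-(a * (u ^ 3 * k + v * (1 + b * u + b ^ 2 * u ^ 2))), ?_⟩
    linear_combination (-a * u ^ 3) * h + a * (1 + b * u + b ^ 2 * u ^ 2) * huv
end

section
/- Let (a, b, c) be integers with a² + b³ = c⁷, gcd(a, b, c) = 1, 2 ∣ c, and a ≡ 1 (mod 4). Then there exists an odd integer t with t ≡ −1 (mod 4) such that a ≡ −t³ (mod 2⁷) and b ≡ −t² (mod 2⁷). -/
theorem odd_pow_aux (x : ℤ) (hx : Odd x) : x ^ 32 ≡ 1 [ZMOD 2 ^ 7] := by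
  have step : ∀ (n : ℤ) (y : ℤ), 2 ∣ n → n ∣ y - 1 → 2 * n ∣ y ^ 2 - 1 := by
    rintro n y ⟨m, rfl⟩ ⟨k, hk⟩
    obtain rfl : y = 2 * m * k + 1 := by linarith
    exact ⟨m * k ^ 2 + k, by ring⟩
  have h1 : (8 : ℤ) ∣ x ^ 2 - 1 := Int.eight_dvd_sq_sub_one_of_odd hx
  have h2 := step _ _ (by norm_num) h1
  have h3 := step _ _ (by norm_num) h2
  have h4 := step _ _ (by norm_num) h3
  have h5 := step _ _ (by norm_num) h4
  ring_nf at h5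
  refine (Int.modEq_iff_dvd.2 ?_).symm
  ring_nf
  exact h5


/-- If `(a, b, c)` is a primitive solution to `a² + b³ = c⁷` with `2 ∣ c` and `a ≡ 1 (mod 4)`,
then there is an odd integer `t ≡ -1 (mod 4)` with `a ≡ -t³` and `b ≡ -t²` modulo `2⁷`. -/
theorem primitive_solution_mod_two_pow_seven (a b c : ℤ)
    (h : a ^ 2 + b ^ 3 = c ^ 7) (hgcd : Int.gcd a (Int.gcd b c : ℤ) = 1)
    (h2 : (2 : ℤ) ∣ c) (ha : a ≡ 1 [ZMOD 4]) :
    ∃ t : ℤ, Odd t ∧ t ≡ -1 [ZMOD 4] ∧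
      a ≡ -t ^ 3 [ZMOD 2 ^ 7] ∧ b ≡ -t ^ 2 [ZMOD 2 ^ 7] := by
  have hao : Odd a := by
    rw [Int.odd_iff]
    have := ha
    unfold Int.ModEq at this
    omega
  have hc : (2 : ℤ) ^ 7 ∣ c ^ 7 := pow_dvd_pow_of_dvd h2 7
  have hb3 : b ^ 3 ≡ -a ^ 2 [ZMOD 2 ^ 7] := by
    refine (Int.modEq_iff_dvd.2 ?_).symm
    have e : b ^ 3 - -a ^ 2 = c ^ 7 := by linarith
    rw [e]
    exact hc
  have hbo : Odd b := by
    have hce : Even (c ^ 7) := (even_iff_two_dvd.2 h2).pow_of_ne_zero (by norm_num)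
    rw [← h] at hce
    by_contra hb
    rw [Int.not_odd_iff_even] at hb
    have h3 : Even (b ^ 3) := hb.pow_of_ne_zero (by norm_num)
    have h4 : Odd (a ^ 2 + b ^ 3) := hao.pow.add_even h3
    exact (Int.not_even_iff_odd.2 h4) hce
  have pa := odd_pow_aux a hao
  have pb := odd_pow_aux b hbo
  refine ⟨-a ^ 11, hao.pow.neg, ?_, ?_, ?_⟩
  · have := (ha.pow 11).neg
    simpa using this
  · have := (pa.mul_right a).symm
    have e : -(-a ^ 11) ^ 3 = a ^ 32 * a := by ring
    rw [e]
    simpa using this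
  · have h1 := (pb.mul_right b).symm
    have h2 := hb3.pow 11
    have e : -(-a ^ 11) ^ 2 = (-a ^ 2) ^ 11 := by ring
    have e2 : b ^ 32 * b = (b ^ 3) ^ 11 := by ring
    rw [one_mul, e2] at h1
    rw [e]
    exact h1.trans h2
end

section
/- Let F₀ = x³y + y³z + z³x and let Φ₆, Φ₁₄, Φ₂₁ be the covariants of F₀ defined below. If (x, y, z) ∈ ℂ³ is nonzero and F₀(x, y, z) = 0, then no two of the three values Φ₆(x, y, z), Φ₁₄(x, y, z), Φ₂₁(x, y, z) vanish simultaneously. -/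
open MvPolynomial

noncomputable section

/-- The Klein quartic form `F₀ = x³y + y³z + z³x`. -/
def F₀ : MvPolynomial (Fin 3) ℚ := X 0 ^ 3 * X 1 + X 1 ^ 3 * X 2 + X 2 ^ 3 * X 0

/-- Partial derivative with respect to the `i`-th variable. -/
def d (i : Fin 3) (f : MvPolynomial (Fin 3) ℚ) : MvPolynomial (Fin 3) ℚ := pderiv i f

/-- The degree-6 covariant `Φ₆ = Ψ₆(F₀)`: `-(1/54)` times the Hessian determinant of `F₀`. -/
def Φ₆ : MvPolynomial (Fin 3) ℚ :=
  C (-(1 : ℚ) / 54) *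
    Matrix.det !![d 0 (d 0 F₀), d 0 (d 1 F₀), d 0 (d 2 F₀);
                  d 1 (d 0 F₀), d 1 (d 1 F₀), d 1 (d 2 F₀);
                  d 2 (d 0 F₀), d 2 (d 1 F₀), d 2 (d 2 F₀)]

/-- The degree-14 covariant `Φ₁₄ = Ψ₁₄(F₀)`: `(1/9)` times the bordered Hessian determinant. -/
def Φ₁₄ : MvPolynomial (Fin 3) ℚ :=
  C ((1 : ℚ) / 9) *
    Matrix.det !![d 0 (d 0 F₀), d 0 (d 1 F₀), d 0 (d 2 F₀), d 0 Φ₆;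
                  d 1 (d 0 F₀), d 1 (d 1 F₀), d 1 (d 2 F₀), d 1 Φ₆;
                  d 2 (d 0 F₀), d 2 (d 1 F₀), d 2 (d 2 F₀), d 2 Φ₆;
                  d 0 Φ₆,       d 1 Φ₆,       d 2 Φ₆,       0]

/-- The degree-21 covariant `Φ₂₁ = Ψ₂₁(F₀)`: `(1/14)` times the Jacobian determinant of
`(F₀, Φ₆, Φ₁₄)`. -/
def Φ₂₁ : MvPolynomial (Fin 3) ℚ :=
  C ((1 : ℚ) / 14) *
    Matrix.det !![d 0 F₀,  d 1 F₀,  d 2 F₀;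
                  d 0 Φ₆,  d 1 Φ₆,  d 2 Φ₆;
                  d 0 Φ₁₄, d 1 Φ₁₄, d 2 Φ₁₄]

def p6 {R : Type*} [CommRing R] (x y z : R) : R := x^5*z - 5*x^2*y^2*z^2 + x*y^5 + y*z^5

def p14 {R : Type*} [CommRing R] (x y z : R) : R :=
      x^14 - 34*x^11*y^2*z - 250*x^9*y*z^4 + 375*x^8*y^4*z^2 + 18*x^7*y^7 + 18*x^7*z^7 - 126*x^6*y^3*z^5 
      - 126*x^5*y^6*z^3 - 250*x^4*y^9*z + 375*x^4*y^2*z^8 - 126*x^3*y^5*z^6 + 375*x^2*y^8*z^4 - 34*x^2*y*z^11 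
      - 34*x*y^11*z^2 - 250*x*y^4*z^9 + y^14 + 18*y^7*z^7 + z^14

def p21 {R : Type*} [CommRing R] (x y z : R) : R :=
      x^21 - 7*x^18*y^2*z + 217*x^16*y*z^4 - 308*x^15*y^4*z^2 - 57*x^14*y^7 - 289*x^14*z^7 + 4018*x^13*y^3*z^5 
      + 637*x^12*y^6*z^3 + 1638*x^11*y^9*z - 6279*x^11*y^2*z^8 + 7007*x^10*y^5*z^6 - 10010*x^9*y^8*z^4 
      + 1638*x^9*y*z^11 - 6279*x^8*y^11*z^2 - 10010*x^8*y^4*z^9 - 289*x^7*y^14 + 10296*x^7*y^7*z^7 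
      - 57*x^7*z^14 + 7007*x^6*y^10*z^5 + 637*x^6*y^3*z^12 + 4018*x^5*y^13*z^3 + 7007*x^5*y^6*z^10 
      + 217*x^4*y^16*z - 10010*x^4*y^9*z^8 - 308*x^4*y^2*z^15 + 637*x^3*y^12*z^6 + 4018*x^3*y^5*z^13 
      - 308*x^2*y^15*z^4 - 6279*x^2*y^8*z^11 - 7*x^2*y*z^18 - 7*x*y^18*z^2 + 1638*x*y^11*z^9 + 217*x*y^4*z^16 
      + y^21 - 57*y^14*z^7 - 289*y^7*z^14 + z^21

theorem d_num (i : Fin 3) (n : ℕ) [n.AtLeastTwo] :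
    pderiv i (ofNat(n) : MvPolynomial (Fin 3) ℚ) = 0 :=
  Derivation.map_natCast (pderiv i) n

theorem dF0 : d 0 F₀ = 3 * X 0 ^ 2 * X 1 + X 2 ^ 3 := by
  simp [d, F₀, Derivation.leibniz, Derivation.leibniz_pow, pderiv_X, Pi.single_apply]
  ring
theorem dF1 : d 1 F₀ = 3 * X 1 ^ 2 * X 2 + X 0 ^ 3 := by
  simp [d, F₀, Derivation.leibniz, Derivation.leibniz_pow, pderiv_X, Pi.single_apply]
  ring
theorem dF2 : d 2 F₀ = 3 * X 2 ^ 2 * X 0 + X 1 ^ 3 := by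
  simp [d, F₀, Derivation.leibniz, Derivation.leibniz_pow, pderiv_X, Pi.single_apply]
  ring

theorem dd00 : d 0 (3 * X 0 ^ 2 * X 1 + X 2 ^ 3) =
      6*X 0*X 1 := by
  simp [d, d_num, Derivation.leibniz, Derivation.leibniz_pow, pderiv_X, Pi.single_apply]
  try ring

theorem dd01 : d 0 (3 * X 1 ^ 2 * X 2 + X 0 ^ 3) =
      3*X 0^2 := by
  simp [d, d_num, Derivation.leibniz, Derivation.leibniz_pow, pderiv_X, Pi.single_apply]
  try ring

theorem dd02 : d 0 (3 * X 2 ^ 2 * X 0 + X 1 ^ 3) =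
      3*X 2^2 := by
  simp [d, d_num, Derivation.leibniz, Derivation.leibniz_pow, pderiv_X, Pi.single_apply]
  try ring

theorem dd10 : d 1 (3 * X 0 ^ 2 * X 1 + X 2 ^ 3) =
      3*X 0^2 := by
  simp [d, d_num, Derivation.leibniz, Derivation.leibniz_pow, pderiv_X, Pi.single_apply]
  try ring

theorem dd11 : d 1 (3 * X 1 ^ 2 * X 2 + X 0 ^ 3) =
      6*X 1*X 2 := by
  simp [d, d_num, Derivation.leibniz, Derivation.leibniz_pow, pderiv_X, Pi.single_apply]
  try ring

theorem dd12 : d 1 (3 * X 2 ^ 2 * X 0 + X 1 ^ 3) =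
      3*X 1^2 := by
  simp [d, d_num, Derivation.leibniz, Derivation.leibniz_pow, pderiv_X, Pi.single_apply]
  try ring

theorem dd20 : d 2 (3 * X 0 ^ 2 * X 1 + X 2 ^ 3) =
      3*X 2^2 := by
  simp [d, d_num, Derivation.leibniz, Derivation.leibniz_pow, pderiv_X, Pi.single_apply]
  try ring

theorem dd21 : d 2 (3 * X 1 ^ 2 * X 2 + X 0 ^ 3) =
      3*X 1^2 := by
  simp [d, d_num, Derivation.leibniz, Derivation.leibniz_pow, pderiv_X, Pi.single_apply]
  try ring

theorem dd22 : d 2 (3 * X 2 ^ 2 * X 0 + X 1 ^ 3) =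
      6*X 0*X 2 := by
  simp [d, d_num, Derivation.leibniz, Derivation.leibniz_pow, pderiv_X, Pi.single_apply]
  try ring

theorem Φ₆_eq : Φ₆ = p6 (X 0) (X 1) (X 2) := by
  have h : (C (-(1 : ℚ) / 54) : MvPolynomial (Fin 3) ℚ) * (-54) = 1 := by
    have : (-54 : MvPolynomial (Fin 3) ℚ) = C (-54 : ℚ) := by
      rw [map_neg]; exact congrArg _ (map_ofNat C 54).symm
    rw [this, ← C_mul]; norm_num
  unfold Φ₆
  rw [← one_mul (p6 (X 0) (X 1) (X 2)), ← h, mul_assoc]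
  congr 1
  simp only [dF0, dF1, dF2, dd00, dd01, dd02, dd10, dd11, dd12, dd20, dd21, dd22, p6]
  simp [Matrix.det_fin_three]
  ring

theorem d6_0 : d 0 (p6 (X 0) (X 1) (X 2)) =
      5*X 0^4*X 2 - 10*X 0*X 1^2*X 2^2 + X 1^5 := by
  simp [d, p6, d_num, Derivation.leibniz, Derivation.leibniz_pow, pderiv_X, Pi.single_apply]
  try ring

theorem d6_1 : d 1 (p6 (X 0) (X 1) (X 2)) =
      - 10*X 0^2*X 1*X 2^2 + 5*X 0*X 1^4 + X 2^5 := by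
  simp [d, p6, d_num, Derivation.leibniz, Derivation.leibniz_pow, pderiv_X, Pi.single_apply]
  try ring

theorem d6_2 : d 2 (p6 (X 0) (X 1) (X 2)) =
      X 0^5 - 10*X 0^2*X 1^2*X 2 + 5*X 1*X 2^4 := by
  simp [d, p6, d_num, Derivation.leibniz, Derivation.leibniz_pow, pderiv_X, Pi.single_apply]
  try ring

theorem det4 {R : Type*} [CommRing R] (a b c e f g h i j k l m n o p q : R) :
    Matrix.det !![a, b, c, e; f, g, h, i; j, k, l, m; n, o, p, q] =
      a * (g * (l * q - m * p) - h * (k * q - m * o) + i * (k * p - l * o))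
      - b * (f * (l * q - m * p) - h * (j * q - m * n) + i * (j * p - l * n))
      + c * (f * (k * q - m * o) - g * (j * q - m * n) + i * (j * o - k * n))
      - e * (f * (k * p - l * o) - g * (j * p - l * n) + h * (j * o - k * n)) := by
  rw [Matrix.det_succ_row_zero, Fin.sum_univ_four]
  simp only [Matrix.det_fin_three, Matrix.submatrix_apply]
  simp [Fin.succAbove, Fin.lt_def]
  ring

theorem Φ₁₄_eq : Φ₁₄ = p14 (X 0) (X 1) (X 2) := by
  have h : (C ((1 : ℚ) / 9) : MvPolynomial (Fin 3) ℚ) * 9 = 1 := by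
    have : (9 : MvPolynomial (Fin 3) ℚ) = C (9 : ℚ) := (map_ofNat C 9).symm
    rw [this, ← C_mul]; norm_num
  unfold Φ₁₄
  rw [← one_mul (p14 (X 0) (X 1) (X 2)), ← h, mul_assoc]
  congr 1
  rw [Φ₆_eq, det4]
  simp only [dF0, dF1, dF2, dd00, dd01, dd02, dd10, dd11, dd12, dd20, dd21, dd22, d6_0, d6_1, d6_2, p14]
  ring

theorem d14_0 : d 0 (p14 (X 0) (X 1) (X 2)) =
      14*X 0^13 - 374*X 0^10*X 1^2*X 2 - 2250*X 0^8*X 1*X 2^4 + 3000*X 0^7*X 1^4*X 2^2 + 126*X 0^6*X 1^7 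
      + 126*X 0^6*X 2^7 - 756*X 0^5*X 1^3*X 2^5 - 630*X 0^4*X 1^6*X 2^3 - 1000*X 0^3*X 1^9*X 2 + 1500*X 0^3*X 1^2*X 2^8 
      - 378*X 0^2*X 1^5*X 2^6 + 750*X 0*X 1^8*X 2^4 - 68*X 0*X 1*X 2^11 - 34*X 1^11*X 2^2 - 250*X 1^4*X 2^9 := by
  simp [d, p14, d_num, Derivation.leibniz, Derivation.leibniz_pow, pderiv_X, Pi.single_apply]
  try ring

theorem d14_1 : d 1 (p14 (X 0) (X 1) (X 2)) =
      - 68*X 0^11*X 1*X 2 - 250*X 0^9*X 2^4 + 1500*X 0^8*X 1^3*X 2^2 + 126*X 0^7*X 1^6 - 378*X 0^6*X 1^2*X 2^5 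
      - 756*X 0^5*X 1^5*X 2^3 - 2250*X 0^4*X 1^8*X 2 + 750*X 0^4*X 1*X 2^8 - 630*X 0^3*X 1^4*X 2^6 
      + 3000*X 0^2*X 1^7*X 2^4 - 34*X 0^2*X 2^11 - 374*X 0*X 1^10*X 2^2 - 1000*X 0*X 1^3*X 2^9 + 14*X 1^13 
      + 126*X 1^6*X 2^7 := by
  simp [d, p14, d_num, Derivation.leibniz, Derivation.leibniz_pow, pderiv_X, Pi.single_apply]
  try ring

theorem d14_2 : d 2 (p14 (X 0) (X 1) (X 2)) =
      - 34*X 0^11*X 1^2 - 1000*X 0^9*X 1*X 2^3 + 750*X 0^8*X 1^4*X 2 + 126*X 0^7*X 2^6 - 630*X 0^6*X 1^3*X 2^4 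
      - 378*X 0^5*X 1^6*X 2^2 - 250*X 0^4*X 1^9 + 3000*X 0^4*X 1^2*X 2^7 - 756*X 0^3*X 1^5*X 2^5 
      + 1500*X 0^2*X 1^8*X 2^3 - 374*X 0^2*X 1*X 2^10 - 68*X 0*X 1^11*X 2 - 2250*X 0*X 1^4*X 2^8 
      + 126*X 1^7*X 2^6 + 14*X 2^13 := by
  simp [d, p14, d_num, Derivation.leibniz, Derivation.leibniz_pow, pderiv_X, Pi.single_apply]
  try ring

theorem Φ₂₁_eq : Φ₂₁ = p21 (X 0) (X 1) (X 2) := by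
  have h : (C ((1 : ℚ) / 14) : MvPolynomial (Fin 3) ℚ) * 14 = 1 := by
    have : (14 : MvPolynomial (Fin 3) ℚ) = C (14 : ℚ) := (map_ofNat C 14).symm
    rw [this, ← C_mul]; norm_num
  unfold Φ₂₁
  rw [← one_mul (p21 (X 0) (X 1) (X 2)), ← h, mul_assoc]
  congr 1
  rw [Φ₆_eq, Φ₁₄_eq, dF0, dF1, dF2, d6_0, d6_1, d6_2, d14_0, d14_1, d14_2]
  simp only [Matrix.det_fin_three, Matrix.of_apply, Matrix.cons_val, p21]
  ring

set_option maxHeartbeats 4000000 in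
theorem klein_identity (x y z : ℂ) (hF : x^3*y + y^3*z + z^3*x = 0) :
    p21 x y z ^ 2 = p14 x y z ^ 3 - 1728 * p6 x y z ^ 7 := by
  unfold p21 p14 p6
  linear_combination (88*x^36*y*z + 1096*x^34*z^4 - 5248*x^33*y^3*z^2 - 168*x^32*y^6 - 41472*x^31*y^2*z^5 + 127184*x^30*y^5*z^3 
      + 8664*x^29*y^8*z - 165384*x^29*y*z^8 + 1154648*x^28*y^4*z^6 - 1816864*x^27*y^7*z^4 + 82432*x^27*z^11 
      - 162864*x^26*y^10*z^2 + 8067984*x^26*y^3*z^9 + 1696*x^25*y^13 - 20565088*x^25*y^6*z^7 + 15891944*x^24*y^9*z^5 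
      + 1693728*x^24*y^2*z^12 + 1988656*x^23*y^12*z^3 - 37078896*x^23*y^5*z^10 - 123696*x^22*y^15*z 
      + 105397032*x^22*y^8*z^8 - 750352*x^22*y*z^15 - 45052928*x^21*y^11*z^6 - 5662304*x^21*y^4*z^13 
      - 21862968*x^20*y^14*z^4 + 15619632*x^20*y^7*z^11 + 27008*x^20*z^18 + 2225472*x^19*y^17*z^2 
      - 180236144*x^19*y^10*z^9 - 7197936*x^19*y^3*z^16 + 27008*x^18*y^20 - 15570512*x^18*y^13*z^7 
      + 38550960*x^18*y^6*z^14 + 81770664*x^17*y^16*z^5 - 4202360*x^17*y^9*z^12 + 2225472*x^17*y^2*z^19 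
      - 7197936*x^16*y^19*z^3 + 543715832*x^16*y^12*z^10 + 81770664*x^16*y^5*z^17 - 750352*x^15*y^22*z 
      - 228105424*x^15*y^15*z^8 - 228105424*x^15*y^8*z^15 - 123696*x^15*y*z^22 + 38550960*x^14*y^18*z^6 
      - 247736400*x^14*y^11*z^13 - 21862968*x^14*y^4*z^20 - 5662304*x^13*y^21*z^4 - 247736400*x^13*y^14*z^11 
      - 15570512*x^13*y^7*z^18 + 1696*x^13*z^25 + 1693728*x^12*y^24*z^2 - 4202360*x^12*y^17*z^9 
      + 543715832*x^12*y^10*z^16 + 1988656*x^12*y^3*z^23 + 82432*x^11*y^27 + 15619632*x^11*y^20*z^7 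
      - 247736400*x^11*y^13*z^14 - 45052928*x^11*y^6*z^21 - 37078896*x^10*y^23*z^5 + 543715832*x^10*y^16*z^12 
      - 180236144*x^10*y^9*z^19 - 162864*x^10*y^2*z^26 + 8067984*x^9*y^26*z^3 - 180236144*x^9*y^19*z^10 
      - 4202360*x^9*y^12*z^17 + 15891944*x^9*y^5*z^24 - 165384*x^8*y^29*z + 105397032*x^8*y^22*z^8 
      - 228105424*x^8*y^15*z^15 + 105397032*x^8*y^8*z^22 + 8664*x^8*y*z^29 - 20565088*x^7*y^25*z^6 
      - 15570512*x^7*y^18*z^13 + 15619632*x^7*y^11*z^20 - 1816864*x^7*y^4*z^27 + 1154648*x^6*y^28*z^4 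
      - 45052928*x^6*y^21*z^11 + 38550960*x^6*y^14*z^18 - 20565088*x^6*y^7*z^25 - 168*x^6*z^32 - 41472*x^5*y^31*z^2 
      + 15891944*x^5*y^24*z^9 + 81770664*x^5*y^17*z^16 - 37078896*x^5*y^10*z^23 + 127184*x^5*y^3*z^30 
      + 1096*x^4*y^34 - 1816864*x^4*y^27*z^7 - 21862968*x^4*y^20*z^14 - 5662304*x^4*y^13*z^21 + 1154648*x^4*y^6*z^28 
      + 127184*x^3*y^30*z^5 + 1988656*x^3*y^23*z^12 - 7197936*x^3*y^16*z^19 + 8067984*x^3*y^9*z^26 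
      - 5248*x^3*y^2*z^33 - 5248*x^2*y^33*z^3 - 162864*x^2*y^26*z^10 + 2225472*x^2*y^19*z^17 + 1693728*x^2*y^12*z^24 
      - 41472*x^2*y^5*z^31 + 88*x*y^36*z + 8664*x*y^29*z^8 - 123696*x*y^22*z^15 - 750352*x*y^15*z^22 
      - 165384*x*y^8*z^29 + 88*x*y*z^36 - 168*y^32*z^6 + 1696*y^25*z^13 + 27008*y^18*z^20 + 82432*y^11*z^27 
      + 1096*y^4*z^34) * hF

set_option maxHeartbeats 1000000 in
theorem klein_x (x y z : ℂ) (hF : x^3*y + y^3*z + z^3*x = 0) (h6 : p6 x y z = 0)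
    (h14 : p14 x y z = 0) : x = 0 := by
  have : x ^ 22 = 0 := by
    unfold p6 at h6
    unfold p14 at h14
    linear_combination (34*x^16*y*z + 216*x^14*z^4 - 409*x^13*y^3*z^2 - (6236030/352947)*x^12*y^6 + (16316351/50421)*x^11*y^2*z^5 
      + (195062675/352947)*x^10*y^5*z^3 + (12927748/50421)*x^9*y^8*z - (713347024/352947)*x^9*y*z^8 
      - (239300776/352947)*x^8*y^4*z^6 - (447166036/352947)*x^7*y^7*z^4 + (342033632/352947)*x^7*z^11 
      - (34613038/352947)*x^6*y^10*z^2 + (443621350/117649)*x^6*y^3*z^9 + (584447/117649)*x^5*y^13 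
      + (1324767938/352947)*x^5*y^6*z^7 + (39215132/50421)*x^4*y^9*z^5 - (1092582266/352947)*x^4*y^2*z^12 
      - (9615212/352947)*x^3*y^12*z^3 - (2168481928/352947)*x^3*y^5*z^10 - (31124357/352947)*x^2*y^15*z 
      - (1720492883/352947)*x^2*y^8*z^8 + (81336205/117649)*x^2*y*z^15 + (423112702/352947)*x*y^11*z^6 
      + (20513441/352947)*x*y^4*z^13 + (1507348/352947)*y^14*z^4 + (177618465/117649)*y^7*z^11 + (1856188/352947)*z^18) * hF
      + (- (80733410/352947)*x^10*z^6 - (308975195/352947)*x^3*z^13 + (10560366/16807)*x^2*y^10*z^4 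
      - (261652184/117649)*x^2*y^3*z^11 + (9243631/117649)*x*y^13*z^2 - (925699612/352947)*x*y^6*z^9 
      + (117016/352947)*y^16 - (167872281/117649)*y^9*z^7 - (231824/352947)*y^2*z^14) * h6
      + (x^8 - (117016/352947)*x*y^7 - (1856188/352947)*x*z^7 - (232052/50421)*y^3*z^5) * h14
  exact pow_eq_zero_iff (by norm_num) |>.1 this

theorem klein_all (x y z : ℂ) (hF : x^3*y + y^3*z + z^3*x = 0) (h6 : p6 x y z = 0)
    (h14 : p14 x y z = 0) : x = 0 ∧ y = 0 ∧ z = 0 := by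
  refine ⟨klein_x x y z hF h6 h14, klein_x y z x ?_ ?_ ?_, klein_x z x y ?_ ?_ ?_⟩
  · linear_combination hF
  · rw [← h6]; unfold p6; ring
  · rw [← h14]; unfold p14; ring
  · linear_combination hF
  · rw [← h6]; unfold p6; ring
  · rw [← h14]; unfold p14; ring

/-- On the Klein quartic `F₀ = 0` in `ℂ³ \ {0}`, no two of the covariants `Φ₆`, `Φ₁₄`, `Φ₂₁`
vanish simultaneously. -/
theorem klein_covariants_no_common_zero (v : Fin 3 → ℂ) (hv : v ≠ 0)
    (hF : aeval v F₀ = 0) :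
    ¬ (aeval v Φ₆ = 0 ∧ aeval v Φ₁₄ = 0) ∧
    ¬ (aeval v Φ₆ = 0 ∧ aeval v Φ₂₁ = 0) ∧
    ¬ (aeval v Φ₁₄ = 0 ∧ aeval v Φ₂₁ = 0) := by
  have hF' : v 0 ^ 3 * v 1 + v 1 ^ 3 * v 2 + v 2 ^ 3 * v 0 = 0 := by
    simpa [F₀] using hF
  have e6 : aeval v Φ₆ = p6 (v 0) (v 1) (v 2) := by
    rw [Φ₆_eq]; simp [p6]
  have e14 : aeval v Φ₁₄ = p14 (v 0) (v 1) (v 2) := by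
    rw [Φ₁₄_eq]; simp [p14]
  have e21 : aeval v Φ₂₁ = p21 (v 0) (v 1) (v 2) := by
    rw [Φ₂₁_eq]; simp [p21]
  rw [e6, e14, e21]
  have key := klein_identity _ _ _ hF'
  have main : ¬ (p6 (v 0) (v 1) (v 2) = 0 ∧ p14 (v 0) (v 1) (v 2) = 0) := by
    rintro ⟨h6, h14⟩
    obtain ⟨a, b, c⟩ := klein_all _ _ _ hF' h6 h14
    apply hv
    ext i
    fin_cases i <;> simp [a, b, c]
  refine ⟨main, ?_, ?_⟩
  · rintro ⟨h6, h21⟩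
    refine main ⟨h6, ?_⟩
    rw [h6, h21] at key
    have : p14 (v 0) (v 1) (v 2) ^ 3 = 0 := by linear_combination -key
    exact pow_eq_zero_iff (by norm_num) |>.1 this
  · rintro ⟨h14, h21⟩
    refine main ⟨?_, h14⟩
    rw [h14, h21] at key
    have : p6 (v 0) (v 1) (v 2) ^ 7 = 0 := by linear_combination (1/1728) * key
    exact pow_eq_zero_iff (by norm_num) |>.1 this

end
end

section
/- Let K be a field containing no nontrivial 7th root of unity (i.e., x⁷ = 1 implies x = 1 for x ∈ K), and let τ : K → K be a field automorphism with τ∘τ∘τ = id. If a, b ∈ K are nonzero and satisfy τ(a)/a² = b⁷, then a⁻¹ = τ(τ(b))·τ(b)²·b⁴. -/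
/-- If `K` is a field with `μ₇(K) = {1}`, `τ` a field automorphism of `K` with `τ³ = id`,
and `a, b ∈ K×` satisfy `τ(a)/a² = b⁷`, then `a⁻¹ = τ(τ(b))·τ(b)²·b⁴`. -/
theorem inv_eq_of_tau_div_sq_eq_pow_seven (K : Type*) [Field K] (τ : K ≃+* K)
    (hμ : ∀ x : K, x ^ 7 = 1 → x = 1)
    (hτ : ∀ x : K, τ (τ (τ x)) = x)
    (a b : K) (ha : a ≠ 0) (hb : b ≠ 0)
    (hab : τ a / a ^ 2 = b ^ 7) :
    a⁻¹ = τ (τ b) * (τ b) ^ 2 * b ^ 4 := by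
  have h1 : τ a = b ^ 7 * a ^ 2 := (div_eq_iff (pow_ne_zero 2 ha)).mp hab
  have h2 : τ (τ a) = (τ b) ^ 7 * (b ^ 7 * a ^ 2) ^ 2 := by
    conv_lhs => rw [h1]
    rw [map_mul, map_pow, map_pow, h1]
  have h3 : a = (τ (τ b)) ^ 7 * ((τ b) ^ 7 * (b ^ 7 * a ^ 2) ^ 2) ^ 2 := by
    conv_lhs => rw [← hτ a, h1]
    rw [map_mul, map_pow, map_pow, map_mul, map_pow, map_pow, h2]
  have h4 : (a * (τ (τ b) * (τ b) ^ 2 * b ^ 4)) ^ 7 = 1 := by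
    apply mul_left_cancel₀ ha
    rw [mul_one]
    conv_rhs => rw [h3]
    ring
  exact inv_eq_of_mul_eq_one_right (hμ _ h4)
end

section
/- Let A be a positive integer and let u, v, w be integers with gcd(v, w) = 1 and u⁷ = v²(Av − w)w⁴. Then there exist integers a, b, r, s, t such that v = r⁷, Av − w = a·s⁷, w = b·t⁷, the integer a·b⁴ is a seventh power, and every prime dividing a or b divides A. -/
lemma aux_root (n d : ℤ) (hn : n ≠ 0) (h : n ^ 8 = d ^ 7) : ∃ e : ℤ, n = e ^ 7 := by
  have h1 : n ^ 7 ∣ d ^ 7 := ⟨n, by rw [← h]; ring⟩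
  obtain ⟨e, rfl⟩ := (Int.pow_dvd_pow_iff (by norm_num)).1 h1
  refine ⟨e, ?_⟩
  have h7 : n ^ 7 ≠ 0 := pow_ne_zero _ hn
  apply mul_left_cancel₀ h7
  linear_combination h

lemma aux_decomp (A : ℤ) : ∀ (N : ℕ) (n : ℤ), n ≠ 0 → n.natAbs ≤ N →
    ∃ (b c : ℤ) (k : ℕ), n = b * c ∧ b ∣ A ^ k ∧ IsCoprime c A := by
  intro N
  induction N with
  | zero => intro n hn h; exact absurd (Int.natAbs_eq_zero.1 (by omega)) hn
  | succ N ih =>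
    intro n hn hN
    by_cases hc : IsCoprime n A
    · exact ⟨1, n, 0, by ring, by simp, hc⟩
    · have hg : Int.gcd n A ≠ 1 := fun h => hc (Int.isCoprime_iff_gcd_eq_one.2 h)
      obtain ⟨m, hm⟩ := Int.gcd_dvd_left n A
      have hgA := Int.gcd_dvd_right n A
      have hm0 : m ≠ 0 := by rintro rfl; simp at hm; exact hn hm
      have hg0 : Int.gcd n A ≠ 0 := by
        intro h0; rw [h0] at hm; simp at hm; exact hn hm
      have hle : m.natAbs ≤ N := by
        have h1 : n.natAbs = Int.gcd n A * m.natAbs := by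
          conv_lhs => rw [hm]
          rw [Int.natAbs_mul, Int.natAbs_natCast]
        have h2 : 2 ≤ Int.gcd n A := by omega
        have h3 : 0 < m.natAbs := Int.natAbs_pos.2 hm0
        have := Nat.mul_le_mul_right m.natAbs h2
        omega
      obtain ⟨b, c, k, h1, h2, h3⟩ := ih m hm0 hle
      refine ⟨Int.gcd n A * b, c, k + 1, ?_, ?_, h3⟩
      · rw [mul_assoc, ← h1]; exact hm
      · rw [pow_succ, mul_comm]; exact mul_dvd_mul h2 hgA

/-- Descent for `u⁷ = v²(Av - w)w⁴` with `gcd(v, w) = 1`: each factor is a seventh power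
up to unit factors `a`, `b` supported on primes dividing `A`, with `ab⁴` a seventh power. -/
theorem superelliptic_descent (A : ℤ) (hA : 0 < A) (u v w : ℤ)
    (hvw : Int.gcd v w = 1) (h : u ^ 7 = v ^ 2 * (A * v - w) * w ^ 4) :
    ∃ a b r s t : ℤ,
      v = r ^ 7 ∧ A * v - w = a * s ^ 7 ∧ w = b * t ^ 7 ∧
      (∃ k : ℤ, a * b ^ 4 = k ^ 7) ∧
      (∀ p : ℤ, Prime p → (p ∣ a ∨ p ∣ b) → p ∣ A) := by
  have hco : IsCoprime v w := Int.isCoprime_iff_gcd_eq_one.2 hvw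
  by_cases hv : v = 0
  · subst hv
    have hw : IsUnit w := isCoprime_zero_left.1 hco
    refine ⟨1, 1, 0, -w, w, by norm_num, ?_, ?_, ⟨1, by norm_num⟩, ?_⟩
    · rcases Int.isUnit_iff.1 hw with rfl | rfl <;> norm_num
    · rcases Int.isUnit_iff.1 hw with rfl | rfl <;> norm_num
    · intro p hp h1
      exact absurd (isUnit_of_dvd_one (by simpa using h1)) hp.not_unit
  by_cases hw : w = 0
  · subst hw
    have hv' : IsUnit v := isCoprime_zero_right.1 hco
    refine ⟨A, A ^ 5, v, v, 0, ?_, ?_, by norm_num, ⟨A ^ 3, by ring⟩, ?_⟩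
    · rcases Int.isUnit_iff.1 hv' with rfl | rfl <;> norm_num
    · rcases Int.isUnit_iff.1 hv' with rfl | rfl <;> norm_num
    · rintro p hp (h1 | h1)
      exacts [h1, hp.dvd_of_dvd_pow h1]
  by_cases hx : A * v - w = 0
  · have hw' : w = A * v := by linarith
    have hv' : IsUnit v := hco.isUnit_of_dvd' dvd_rfl ⟨A, by rw [hw']; ring⟩
    refine ⟨A ^ 3, A, v, 0, v, ?_, by rw [hx]; norm_num, ?_, ⟨A, by ring⟩, ?_⟩
    · rcases Int.isUnit_iff.1 hv' with rfl | rfl <;> norm_num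
    · rw [hw']; rcases Int.isUnit_iff.1 hv' with rfl | rfl <;> norm_num
    · rintro p hp (h1 | h1)
      exacts [hp.dvd_of_dvd_pow h1, h1]
  have hodd : Odd 7 := by decide
  have hvx : IsCoprime v (A * v - w) := by
    obtain ⟨p, q, hpq⟩ := hco
    exact ⟨p + q * A, -q, by linear_combination hpq⟩
  have hc1 : IsCoprime (v ^ 2) ((A * v - w) * w ^ 4) :=
    (hvx.mul_right hco.pow_right).pow_left
  have he1 : v ^ 2 * ((A * v - w) * w ^ 4) = u ^ 7 := by rw [h]; ring
  obtain ⟨d, hd⟩ := Int.eq_pow_of_mul_eq_pow_odd_left hc1 hodd he1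
  obtain ⟨m, hm⟩ := Int.eq_pow_of_mul_eq_pow_odd_right hc1 hodd he1
  obtain ⟨r, hr⟩ := aux_root v (d ^ 4) hv (by
    calc v ^ 8 = (v ^ 2) ^ 4 := by ring
      _ = _ := by rw [hd]; ring)
  obtain ⟨a, s0, k, ha, hak, hs⟩ := aux_decomp A _ (A * v - w) hx le_rfl
  obtain ⟨b, t0, l, hb, hbl, ht⟩ := aux_decomp A _ w hw le_rfl
  have hsa : IsCoprime s0 a := (hs.pow_right (n := k)).of_isCoprime_of_dvd_right hak
  have hsb : IsCoprime s0 b := (hs.pow_right (n := l)).of_isCoprime_of_dvd_right hbl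
  have hta : IsCoprime t0 a := (ht.pow_right (n := k)).of_isCoprime_of_dvd_right hak
  have htb : IsCoprime t0 b := (ht.pow_right (n := l)).of_isCoprime_of_dvd_right hbl
  have hst : IsCoprime s0 t0 := by
    have h1 : IsCoprime s0 (A * v) := by
      refine hs.mul_right ?_
      exact (hvx.of_isCoprime_of_dvd_right ⟨a, by rw [ha]; ring⟩).symm
    obtain ⟨p, q, hpq⟩ := h1
    exact ⟨p + q * a, q * b, by linear_combination hpq - q * ha - q * hb⟩
  have hc2 : IsCoprime (s0 * t0 ^ 4) (a * b ^ 4) :=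
    IsCoprime.mul_left (hsa.mul_right hsb.pow_right)
      (IsCoprime.mul_right hta.pow_left htb.pow)
  have he2 : (s0 * t0 ^ 4) * (a * b ^ 4) = m ^ 7 := by
    rw [← hm, ha]
    conv_rhs => rw [hb]
    ring
  obtain ⟨n, hn⟩ := Int.eq_pow_of_mul_eq_pow_odd_left hc2 hodd he2
  obtain ⟨k', hk'⟩ := Int.eq_pow_of_mul_eq_pow_odd_right hc2 hodd he2
  have hc3 : IsCoprime s0 (t0 ^ 4) := hst.pow_right
  obtain ⟨s, hs'⟩ := Int.eq_pow_of_mul_eq_pow_odd_left hc3 hodd hn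
  obtain ⟨e, he⟩ := Int.eq_pow_of_mul_eq_pow_odd_right hc3 hodd hn
  have ht0 : t0 ≠ 0 := by rintro rfl; exact hw (by rw [hb]; ring)
  obtain ⟨t, ht'⟩ := aux_root t0 (e ^ 2) ht0 (by
    calc t0 ^ 8 = (t0 ^ 4) ^ 2 := by ring
      _ = _ := by rw [he]; ring)
  refine ⟨a, b, r, s, t, hr, by rw [ha, hs'], by rw [hb, ht'], ⟨k', hk'⟩, ?_⟩
  rintro p hp (h1 | h1)
  · exact hp.dvd_of_dvd_pow (h1.trans hak)
  · exact hp.dvd_of_dvd_pow (h1.trans hbl)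
end
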